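/- Let g : ℝ → ℝ and h : ℝ → ℝ be twice continuously differentiable with bounded derivatives, and define f̃ : L²(F;ℝ) → ℝ by f̃(ϑ) = g(E[h(ϑ)]). Then f̃ is Fréchet differentiable at every ϑ₀ ∈ L²(F;ℝ), with derivative Df̃(ϑ₀)(η) = E[g'(E[h(ϑ₀)]) h'(ϑ₀) η] for all η ∈ L²(F;ℝ). -/

import Mathlib

open MeasureTheory

lemma taylor_bound_aux (h : ℝ → ℝ) (hh : ContDiff ℝ 2 h) (C : ℝ)
    (hh'' : ∀ x, |deriv (deriv h) x| ≤ C) (x y : ℝ) :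
    |h y - h x - deriv h x * (y - x)| ≤ C * (y - x) ^ 2 := by
  have hC : 0 ≤ C := (abs_nonneg _).trans (hh'' 0)
  have hd : Differentiable ℝ h := hh.differentiable (by norm_num)
  have hd1 : ContDiff ℝ 1 (deriv h) := by
    have : ContDiff ℝ (1 + 1) h := by norm_num; exact hh
    exact (contDiff_succ_iff_deriv.1 this).2.2
  have hd2 : Differentiable ℝ (deriv h) := hd1.differentiable (by norm_num)
  have h1 : ∀ z, |deriv h z - deriv h x| ≤ C * |z - x| := fun z =>
    Convex.norm_image_sub_le_of_norm_deriv_le (f := deriv h) (s := Set.univ) (C := C)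
      (fun w _ => hd2 w) (fun w _ => hh'' w) convex_univ (Set.mem_univ x) (Set.mem_univ z)
  have h2 := Convex.norm_image_sub_le_of_norm_hasDerivWithin_le
    (f := fun z => h z - deriv h x * z) (f' := fun z => deriv h z - deriv h x)
    (s := Set.uIcc x y) (C := C * |y - x|)
    (fun w _ => ((hd w).hasDerivAt.sub
      (by simpa using (hasDerivAt_id w).const_mul (deriv h x))).hasDerivWithinAt)
    (fun w hw => (h1 w).trans (mul_le_mul_of_nonneg_left
      (by simpa using Set.abs_sub_left_of_mem_uIcc hw) hC))
    (convex_uIcc x y) Set.left_mem_uIcc Set.right_mem_uIcc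
  simp only [Real.norm_eq_abs] at h2
  calc _ = |h y - deriv h x * y - (h x - deriv h x * x)| := by congr 1; ring
    _ ≤ _ := h2
    _ = _ := by rw [mul_assoc, ← sq, sq_abs]

lemma integrable_comp_aux {Ω : Type*} [MeasurableSpace Ω] (P : Measure Ω)
    [IsProbabilityMeasure P] (h : ℝ → ℝ) (hd : Differentiable ℝ h) (C : ℝ)
    (hh' : ∀ x, |deriv h x| ≤ C) (u : Lp ℝ 2 P) : Integrable (fun ω => h (u ω)) P := by
  have hu : Integrable (fun ω => u ω) P := (Lp.memLp u).integrable (by norm_num)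
  refine ((integrable_const |h 0|).add (hu.abs.const_mul C)).mono'
    (hd.continuous.comp_aestronglyMeasurable hu.aestronglyMeasurable) (.of_forall fun ω => ?_)
  have h1 : ‖h (u ω) - h 0‖ ≤ C * ‖u ω - 0‖ :=
    Convex.norm_image_sub_le_of_norm_deriv_le (f := h) (s := Set.univ) (C := C)
      (fun w _ => hd w) (fun w _ => hh' w) convex_univ (Set.mem_univ 0) (Set.mem_univ _)
  have h2 := abs_sub_abs_le_abs_sub (h (u ω)) (h 0)
  simp only [Real.norm_eq_abs, sub_zero, Pi.add_apply] at *
  linarith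

lemma hasFDerivAt_aux {Ω : Type*} [MeasurableSpace Ω] (P : Measure Ω) [IsProbabilityMeasure P]
    (h : ℝ → ℝ) (hh : ContDiff ℝ 2 h) (C : ℝ)
    (hh' : ∀ x, |deriv h x| ≤ C) (hh'' : ∀ x, |deriv (deriv h) x| ≤ C) (u : Lp ℝ 2 P) :
    ∃ D : Lp ℝ 2 P →L[ℝ] ℝ,
      HasFDerivAt (fun v : Lp ℝ 2 P => ∫ ω, h (v ω) ∂P) D u ∧
      ∀ η : Lp ℝ 2 P, D η = ∫ ω, deriv h (u ω) * η ω ∂P := by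
  have hd : Differentiable ℝ h := hh.differentiable (by norm_num)
  have hc : Continuous (deriv h) := hh.continuous_deriv (by norm_num)
  have hm : MemLp (fun ω => deriv h (u ω)) 2 P :=
    MemLp.of_bound (hc.comp_aestronglyMeasurable (Lp.aestronglyMeasurable u)) C
      (.of_forall fun ω => hh' _)
  have hD : ∀ η : Lp ℝ 2 P, innerSL ℝ hm.toLp η = ∫ ω, deriv h (u ω) * η ω ∂P := by
    intro η
    rw [innerSL_apply_apply, L2.inner_def]
    refine integral_congr_ae ?_
    filter_upwards [hm.coeFn_toLp] with ω hω
    rw [hω]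
    simp [mul_comm]
  refine ⟨innerSL ℝ hm.toLp, ?_, hD⟩
  rw [hasFDerivAt_iff_isLittleO]
  have key : ∀ v : Lp ℝ 2 P, ‖(∫ ω, h (v ω) ∂P) - (∫ ω, h (u ω) ∂P)
      - innerSL ℝ hm.toLp (v - u)‖ ≤ C * ‖v - u‖ ^ 2 := by
    intro v
    have i3 : Integrable (fun ω => deriv h (u ω) * (v - u : Lp ℝ 2 P) ω) P :=
      hm.integrable_mul (Lp.memLp (v - u))
    have i1 := integrable_comp_aux P h hd C hh' v
    have i2 := integrable_comp_aux P h hd C hh' u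
    have i12 : Integrable (fun ω => h (v ω) - h (u ω)) P := i1.sub i2
    have i4 : Integrable (fun ω => ((v - u : Lp ℝ 2 P) ω) ^ 2) P :=
      (Lp.memLp (v - u)).integrable_sq
    have hn : ‖v - u‖ ^ 2 = ∫ ω, ((v - u : Lp ℝ 2 P) ω) ^ 2 ∂P := by
      rw [← real_inner_self_eq_norm_sq, L2.inner_def]
      simp [sq]
    rw [hD, ← integral_sub i1 i2, ← integral_sub i12 i3, hn, ← integral_const_mul]
    refine norm_integral_le_of_norm_le (i4.const_mul C) ?_
    filter_upwards [Lp.coeFn_sub v u] with ω hω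
    rw [hω]
    exact taylor_bound_aux h hh C hh'' _ _
  refine (Asymptotics.IsBigO.of_bound C (.of_forall fun v => ?_)).trans_isLittleO
    (Asymptotics.isLittleO_pow_sub_sub u (m := 2) (by norm_num))
  simpa using key v

/-- If `g, h : ℝ → ℝ` are twice continuously differentiable with bounded
derivatives, then `f̃(ϑ) := g(E[h(ϑ)])` is Fréchet differentiable at every
`ϑ₀ ∈ L²(F;ℝ)` with `Df̃(ϑ₀)(η) = E[g'(E[h(ϑ₀)]) h'(ϑ₀) η]`. -/
theorem statement2 {Ω : Type*} [MeasurableSpace Ω] (P : Measure Ω) [IsProbabilityMeasure P]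
    (g h : ℝ → ℝ) (hg : ContDiff ℝ 2 g) (hh : ContDiff ℝ 2 h)
    (Cg Ch : ℝ)
    (hg' : ∀ x, |deriv g x| ≤ Cg) (hg'' : ∀ x, |deriv (deriv g) x| ≤ Cg)
    (hh' : ∀ x, |deriv h x| ≤ Ch) (hh'' : ∀ x, |deriv (deriv h) x| ≤ Ch)
    (ϑ₀ : Lp ℝ 2 P) :
    ∃ D : Lp ℝ 2 P →L[ℝ] ℝ,
      HasFDerivAt (fun ϑ : Lp ℝ 2 P => g (∫ ω, h (ϑ ω) ∂P)) D ϑ₀ ∧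
      ∀ η : Lp ℝ 2 P,
        D η = ∫ ω, deriv g (∫ ω', h (ϑ₀ ω') ∂P) * deriv h (ϑ₀ ω) * η ω ∂P := by
  obtain ⟨D, hD, hD'⟩ := hasFDerivAt_aux P h hh Ch hh' hh'' ϑ₀
  refine ⟨deriv g (∫ ω', h (ϑ₀ ω') ∂P) • D, ?_, fun η => ?_⟩
  · have h1 : HasDerivAt g (deriv g (∫ ω', h (ϑ₀ ω') ∂P)) (∫ ω', h (ϑ₀ ω') ∂P) :=
      (hg.differentiable (by norm_num) _).hasDerivAt
    exact h1.comp_hasFDerivAt ϑ₀ hD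
  · simp only [mul_assoc, integral_const_mul]
    simp [hD']
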